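/- There exists a Legendre pair (A, B) of length 111 such that both blocks are invariant under multiplication by 10, i.e. 10·A = A and 10·B = B as subsets of ℤ/111ℤ (equivalently, A and B are unions of orbits of the subgroup H = {1, 10, 100} of the unit group of ℤ/111ℤ acting by multiplication). -/

import Mathlib

/-- The subset of `ℤ/111ℤ` whose indicator function is given by the binary digits of `m`. -/
def bitSet (m : ℕ) : Finset (ZMod 111) :=
  Finset.univ.filter fun x => m.testBit x.val = true

/-- The number of ways to write `c` as a difference of elements of `A` counts the `x ∈ A` with
`x - c ∈ A`. -/
theorem card_filter_sub_eq {G : Type*} [AddCommGroup G] [DecidableEq G] (A : Finset G) (c : G) :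
    ((A ×ˢ A).filter (fun p => p.1 - p.2 = c)).card = (A.filter (fun x => x - c ∈ A)).card := by
  refine Finset.card_bij' (fun p _ => p.1) (fun x _ => (x, x - c)) ?_ ?_ ?_ ?_
  · rintro ⟨a, b⟩ h
    simp only [Finset.mem_filter, Finset.mem_product] at h ⊢
    obtain ⟨⟨ha, hb⟩, rfl⟩ := h
    simpa using ⟨ha, hb⟩
  · intro x h
    simpa using h
  · rintro ⟨a, b⟩ h
    simp only [Finset.mem_filter] at h
    simp [← h.2]
  · intro x _
    rfl

theorem card_filter_sub_bitSet (m : ℕ) (c : ZMod 111) :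
    ((bitSet m ×ˢ bitSet m).filter (fun p => p.1 - p.2 = c)).card =
      (Finset.univ.filter
        fun x : ZMod 111 => m.testBit x.val = true ∧ m.testBit (x - c).val = true).card := by
  rw [card_filter_sub_eq]
  congr 1
  ext x
  simp [bitSet]


/-- There exists a Legendre pair `(A, B)` of length `111` both of whose blocks
are invariant under multiplication by `10` (equivalently, are unions of orbits
of the subgroup `{1, 10, 100}` of units of `ℤ/111ℤ`). -/
theorem exists_H_invariant_legendre_pair_111 :
    ∃ A B : Finset (ZMod 111),
      A.card = 55 ∧ B.card = 55 ∧
      (∀ c : ZMod 111, c ≠ 0 →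
        ((A ×ˢ A).filter (fun p => p.1 - p.2 = c)).card +
        ((B ×ˢ B).filter (fun p => p.1 - p.2 = c)).card = 54) ∧
      A.image (fun x => 10 * x) = A ∧
      B.image (fun x => 10 * x) = B := by
  refine ⟨bitSet 1494942291570334587934511033863327, bitSet 1442883514629901103305912897309161, by decide +kernel, by decide +kernel, ?_,
    by decide +kernel, by decide +kernel⟩
  simp only [card_filter_sub_bitSet]
  decide +kernel
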